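/- arXiv:0901.2611 — 3 statements merged into one kernel-verified Lean document; each statement's English description precedes it below -/
import Mathlib

section
/- Let n ≥ 2 and let A be an associative ring. Let u_1, …, u_n ∈ A be central, let θ_1, …, θ_n ∈ A satisfy θ_i·θ_j = −θ_j·θ_i for i ≠ j, and let Ω_{ij} ∈ A (1 ≤ i, j ≤ n) be central elements with Ω_{ij} = −Ω_{ji} and Ω_{1j} = 0 for all j. For 0 ≤ k ≤ ⌊(n−1)/2⌋ define Φ_k = Σ_{τ ∈ S_n} sgn(τ)·u_{τ(1)}·θ_{τ(2)}·⋯·θ_{τ(n−2k)}·Ω_{τ(n−2k+1)τ(n−2k+2)}·⋯·Ω_{τ(n−1)τ(n)} (sum over all permutations τ of {1,…,n}), and define, summing over all permutations ρ of {2,…,n}, Ξ_k = Σ_ρ sgn(ρ)·θ_{ρ(2)}·⋯·θ_{ρ(n−2k)}·Ω_{ρ(n−2k+1)ρ(n−2k+2)}·⋯·Ω_{ρ(n−1)ρ(n)} for 0 ≤ k ≤ ⌊(n−1)/2⌋, and Υ_k = Σ_ρ sgn(ρ)·u_{ρ(2)}·θ_{ρ(3)}·⋯·θ_{ρ(n−2k)}·Ω_{ρ(n−2k+1)ρ(n−2k+2)}·⋯·Ω_{ρ(n−1)ρ(n)}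 for 0 ≤ k ≤ ⌊(n−2)/2⌋. Then Φ_k = u_1·Ξ_k − (n−2k−1)·θ_1·Υ_k for 0 ≤ k ≤ ⌊(n−2)/2⌋, and if n is odd then Φ_{(n−1)/2} = u_1·Ξ_{(n−1)/2}. -/
open Finset

/-- The embedding `Fin (n-1) → Fin n` onto the indices `{1, …, n-1}` (i.e. `{2, …, n}`
in 1-indexed notation). -/
def embSucc (n : ℕ) : Fin (n - 1) → Fin n :=
  fun j => ⟨(j : ℕ) + 1, by have := j.isLt; omega⟩

/-- `Φ_k = Σ_{τ ∈ Sₙ} sgn(τ)·u_{τ(1)}·θ_{τ(2)}⋯θ_{τ(n−2k)}·Ω_{τ(n−2k+1)τ(n−2k+2)}⋯Ω_{τ(n−1)τ(n)}`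
(written 0-indexed: `u` at position `0`, then `n−2k−1` θ's, then `k` Ω's). -/
def chernPhi {A : Type*} [Ring A] (n k : ℕ) (hk : 2 * k + 1 ≤ n)
    (u θ : Fin n → A) (Ω : Fin n → Fin n → A) : A :=
  ∑ τ : Equiv.Perm (Fin n), (Equiv.Perm.sign τ : ℤ) •
    (u (τ ⟨0, by omega⟩) *
      ((List.ofFn fun i => θ (τ i)).tail.take (n - 2 * k - 1)).prod *
      (List.ofFn fun j : Fin k =>
        Ω (τ ⟨n - 2 * k + 2 * (j : ℕ), by have := j.isLt; omega⟩)
          (τ ⟨n - 2 * k + 2 * (j : ℕ) + 1, by have := j.isLt; omega⟩)).prod)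

/-- `Ψ-type sums: Σ_{ρ ∈ S_m} sgn(ρ)·θ_{ρ(1)}⋯θ_{ρ(m−2k)}·Ω_{ρ(m−2k+1)ρ(m−2k+2)}⋯Ω_{ρ(m−1)ρ(m)}`
(written 0-indexed: `m−2k` θ's, then `k` Ω's). -/
def chernPsi {A : Type*} [Ring A] (m k : ℕ) (hk : 2 * k ≤ m)
    (θ : Fin m → A) (Ω : Fin m → Fin m → A) : A :=
  ∑ ρ : Equiv.Perm (Fin m), (Equiv.Perm.sign ρ : ℤ) •
    (((List.ofFn fun i => θ (ρ i)).take (m - 2 * k)).prod *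
      (List.ofFn fun j : Fin k =>
        Ω (ρ ⟨m - 2 * k + 2 * (j : ℕ), by have := j.isLt; omega⟩)
          (ρ ⟨m - 2 * k + 2 * (j : ℕ) + 1, by have := j.isLt; omega⟩)).prod)

/-- Insert the value `0` at position `p` into the word of `ρ` shifted up by one. -/
def insertZeroPerm {m : ℕ} (p : Fin (m + 1)) (ρ : Equiv.Perm (Fin m)) :
    Equiv.Perm (Fin (m + 1)) :=
  Equiv.Perm.decomposeFin.symm (0, ρ) * p.cycleRange

theorem insertZeroPerm_self {m : ℕ} (p : Fin (m + 1)) (ρ : Equiv.Perm (Fin m)) :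
    insertZeroPerm p ρ p = 0 := by
  simp [insertZeroPerm]

theorem insertZeroPerm_succAbove {m : ℕ} (p : Fin (m + 1)) (ρ : Equiv.Perm (Fin m))
    (i : Fin m) : insertZeroPerm p ρ (p.succAbove i) = (ρ i).succ := by
  simp [insertZeroPerm]

theorem sign_insertZeroPerm {m : ℕ} (p : Fin (m + 1)) (ρ : Equiv.Perm (Fin m)) :
    Equiv.Perm.sign (insertZeroPerm p ρ) = (-1) ^ (p : ℕ) * Equiv.Perm.sign ρ := by
  simp [insertZeroPerm, Equiv.Perm.decomposeFin.symm_sign, mul_comm]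

theorem insertZeroPerm_bijective (m : ℕ) :
    Function.Bijective
      (fun x : Fin (m + 1) × Equiv.Perm (Fin m) => insertZeroPerm x.1 x.2) := by
  rw [Fintype.bijective_iff_injective_and_card]
  refine ⟨?_, Fintype.card_congr Equiv.Perm.decomposeFin.symm⟩
  rintro ⟨p, ρ⟩ ⟨q, σ⟩ h
  simp only at h
  have hpq : p = q := by
    apply (insertZeroPerm p ρ).injective
    rw [insertZeroPerm_self, h, insertZeroPerm_self]
  subst hpq
  have := Equiv.Perm.decomposeFin.symm.injective (mul_right_cancel h)
  simpa using this

theorem sum_perm_eq_sum_insertZeroPerm {M : Type*} [AddCommMonoid M] {m : ℕ}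
    (f : Equiv.Perm (Fin (m + 1)) → M) :
    ∑ τ, f τ = ∑ p : Fin (m + 1), ∑ ρ : Equiv.Perm (Fin m), f (insertZeroPerm p ρ) := by
  rw [← (insertZeroPerm_bijective m).sum_comp, Fintype.sum_prod_type]

theorem ofFn_eq_insertIdx {α : Type*} {m : ℕ} (f : Fin (m + 1) → α) (q : Fin (m + 1)) :
    List.ofFn f = (List.ofFn fun i => f (q.succAbove i)).insertIdx q (f q) := by
  have hq : (q : ℕ) ≤ m := by omega
  apply List.ext_getElem
  · simp [List.length_insertIdx, hq]
  · intro i h₁ h₂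
    simp only [List.length_ofFn] at h₁
    rw [List.getElem_insertIdx]
    split_ifs with h h'
    · simp only [List.getElem_ofFn]
      rw [Fin.succAbove_of_castSucc_lt _ _ (by simpa [Fin.lt_def] using h)]
      rfl
    · rw [List.getElem_ofFn]
      exact congrArg f (Fin.ext h')
    · simp only [List.getElem_ofFn]
      rw [Fin.succAbove_of_le_castSucc _ _ (by simp [Fin.le_def]; omega)]
      congr 1
      ext
      simp
      omega

theorem take_succ_insertIdx {α : Type*} (x : α) :
    ∀ (l : List α) (q N : ℕ), q ≤ N →
      (l.insertIdx q x).take (N + 1) = (l.take N).insertIdx q x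
  | l, 0, N, _ => by simp
  | [], q + 1, N, _ => by simp
  | a :: l, q + 1, 0, h => by omega
  | a :: l, q + 1, N + 1, h => by
    simp [take_succ_insertIdx x l q N (by omega)]

theorem prod_insertIdx_of_anticommute {A : Type*} [Ring A] (x : A) :
    ∀ (l : List A) (q : ℕ), q ≤ l.length → (∀ y ∈ l, y * x = -(x * y)) →
      (l.insertIdx q x).prod = (-1) ^ q * (x * l.prod)
  | l, 0, _, _ => by simp
  | [], q + 1, h, _ => by simp at h
  | a :: l, q + 1, h, hl => by
    rw [List.insertIdx_succ_cons, List.prod_cons, List.prod_cons,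
      prod_insertIdx_of_anticommute x l q (by simpa using h)
        (fun y hy => hl y (List.mem_cons_of_mem _ hy)),
      ← mul_assoc, ((Commute.neg_one_right a).pow_right q).eq, mul_assoc, ← mul_assoc a,
      hl a List.mem_cons_self, pow_succ]
    simp [mul_assoc]

/-- The summand of `chernPhi`, without its sign. -/
def chernPhiTerm {A : Type*} [Ring A] (n k : ℕ) (hk : 2 * k + 1 ≤ n)
    (u θ : Fin n → A) (Ω : Fin n → Fin n → A) (τ : Equiv.Perm (Fin n)) : A :=
  u (τ ⟨0, by omega⟩) *
    ((List.ofFn fun i => θ (τ i)).tail.take (n - 2 * k - 1)).prod *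
    (List.ofFn fun j : Fin k =>
      Ω (τ ⟨n - 2 * k + 2 * (j : ℕ), by have := j.isLt; omega⟩)
        (τ ⟨n - 2 * k + 2 * (j : ℕ) + 1, by have := j.isLt; omega⟩)).prod

section Term

variable {A : Type*} [Ring A] {m k : ℕ}

theorem chernPhi_eq_sum_term (n k : ℕ) (hk : 2 * k + 1 ≤ n)
    (u θ : Fin n → A) (Ω : Fin n → Fin n → A) :
    chernPhi n k hk u θ Ω =
      ∑ τ : Equiv.Perm (Fin n), (Equiv.Perm.sign τ : ℤ) • chernPhiTerm n k hk u θ Ω τ :=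
  rfl

theorem insertZeroPerm_apply_of_lt (p : Fin (m + 1)) (ρ : Equiv.Perm (Fin m)) (i : ℕ)
    (hi : i < m) (hp : (p : ℕ) ≤ i) (i' : ℕ) (hi' : i' = i + 1) :
    insertZeroPerm p ρ ⟨i', by omega⟩ = (ρ ⟨i, hi⟩).succ := by
  subst hi'
  rw [← insertZeroPerm_succAbove p ρ, Fin.succAbove_of_le_castSucc _ _ (by simpa [Fin.le_def])]
  rfl

theorem sum_insertZeroPerm_zero (hk : 2 * k + 1 ≤ m + 1)
    (u θ : Fin (m + 1) → A) (Ω : Fin (m + 1) → Fin (m + 1) → A) :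
    ∑ ρ : Equiv.Perm (Fin m), (Equiv.Perm.sign (insertZeroPerm 0 ρ) : ℤ) •
        chernPhiTerm (m + 1) k hk u θ Ω (insertZeroPerm 0 ρ) =
      u 0 * chernPsi m k (by omega) (fun i => θ i.succ) (fun i j => Ω i.succ j.succ) := by
  rw [chernPsi, Finset.mul_sum]
  refine Finset.sum_congr rfl fun ρ _ => ?_
  have hs : ∀ i : Fin m, insertZeroPerm 0 ρ i.succ = (ρ i).succ := fun i => by
    simpa using insertZeroPerm_succAbove 0 ρ i
  have h0 : insertZeroPerm 0 ρ ⟨0, by omega⟩ = 0 := insertZeroPerm_self 0 ρ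
  rw [sign_insertZeroPerm, mul_smul_comm, chernPhiTerm, h0, mul_assoc, List.ofFn_succ,
    List.tail_cons, show m + 1 - 2 * k - 1 = m - 2 * k by omega]
  simp only [hs, Fin.val_zero, pow_zero, one_mul]
  congr 5
  funext j
  have := j.isLt
  rw [insertZeroPerm_apply_of_lt 0 ρ (m - 2 * k + 2 * j) (by omega) (by simp) _ (by omega),
    insertZeroPerm_apply_of_lt 0 ρ (m - 2 * k + 2 * j + 1) (by omega) (by simp) _ (by omega)]

theorem chernPhiTerm_insertZeroPerm_eq_zero (hk : 2 * k + 1 ≤ m + 1)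
    (u θ : Fin (m + 1) → A) (Ω : Fin (m + 1) → Fin (m + 1) → A)
    (hΩl : ∀ j, Ω 0 j = 0) (hΩr : ∀ j, Ω j 0 = 0)
    (q : Fin m) (hq : m - 2 * k ≤ q) (ρ : Equiv.Perm (Fin m)) :
    chernPhiTerm (m + 1) k hk u θ Ω (insertZeroPerm q.succ ρ) = 0 := by
  have hqm := q.isLt
  rw [chernPhiTerm, List.prod_eq_zero (l := List.ofFn _), mul_zero]
  rw [List.mem_ofFn]
  refine ⟨⟨(q - (m - 2 * k)) / 2, by omega⟩, ?_⟩
  have h0 := insertZeroPerm_self q.succ ρ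
  rcases Nat.mod_two_eq_zero_or_one (q - (m - 2 * k)) with h | h
  · convert hΩl _ using 2
    convert h0 using 2
    ext
    simp
    omega
  · convert hΩr _ using 2
    convert h0 using 2
    ext
    simp
    omega

theorem sum_insertZeroPerm_succ (hk : 2 * k + 1 ≤ m + 1)
    (u θ : Fin (m + 2) → A) (Ω : Fin (m + 2) → Fin (m + 2) → A)
    (hu : ∀ i a, Commute (u i) a) (hθ : ∀ i j, i ≠ j → θ i * θ j = -(θ j * θ i))
    (q : Fin (m + 1)) (hq : (q : ℕ) < m + 1 - 2 * k) :
    ∑ ρ : Equiv.Perm (Fin (m + 1)), (Equiv.Perm.sign (insertZeroPerm q.succ ρ) : ℤ) •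
        chernPhiTerm (m + 2) k (by omega) u θ Ω (insertZeroPerm q.succ ρ) =
      -(θ 0 * chernPhi (m + 1) k hk (fun i => u i.succ) (fun i => θ i.succ)
        (fun i j => Ω i.succ j.succ)) := by
  rw [chernPhi, Finset.mul_sum, ← Finset.sum_neg_distrib]
  refine Finset.sum_congr rfl fun ρ _ => ?_
  have h0 : insertZeroPerm q.succ ρ ⟨0, by omega⟩ = (ρ ⟨0, by omega⟩).succ := by
    simpa using insertZeroPerm_succAbove q.succ ρ 0
  have hs : ∀ i : Fin m, insertZeroPerm q.succ ρ (q.succAbove i).succ = (ρ i.succ).succ :=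
    fun i => by rw [← Fin.succ_succAbove_succ, insertZeroPerm_succAbove]
  have hN : m + 2 - 2 * k - 1 = (m + 1 - 2 * k - 1) + 1 := by omega
  have hΩ : ∀ j : Fin k,
      Ω (insertZeroPerm q.succ ρ ⟨m + 2 - 2 * k + 2 * j, by have := j.isLt; omega⟩)
        (insertZeroPerm q.succ ρ ⟨m + 2 - 2 * k + 2 * j + 1, by have := j.isLt; omega⟩) =
      Ω (ρ ⟨m + 1 - 2 * k + 2 * j, by have := j.isLt; omega⟩).succ
        (ρ ⟨m + 1 - 2 * k + 2 * j + 1, by have := j.isLt; omega⟩).succ := fun j => by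
    have := j.isLt
    rw [insertZeroPerm_apply_of_lt q.succ ρ (m + 1 - 2 * k + 2 * j) (by omega)
        (by simp; omega) _ (by omega),
      insertZeroPerm_apply_of_lt q.succ ρ (m + 1 - 2 * k + 2 * j + 1) (by omega)
        (by simp; omega) _ (by omega)]
  have hp : ((List.ofFn fun i => θ (insertZeroPerm q.succ ρ i)).tail.take
      (m + 2 - 2 * k - 1)).prod = (-1) ^ (q : ℕ) * (θ 0 *
        ((List.ofFn fun i => θ (ρ i).succ).tail.take (m + 1 - 2 * k - 1)).prod) := by
    rw [List.ofFn_succ, List.tail_cons, List.ofFn_succ (f := fun i => θ (ρ i).succ),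
      List.tail_cons, ofFn_eq_insertIdx (fun i : Fin (m + 1) => θ (insertZeroPerm q.succ ρ i.succ)) q, hN,
      take_succ_insertIdx _ _ _ _ (by omega), insertZeroPerm_self]
    simp only [hs]
    refine prod_insertIdx_of_anticommute _ _ _ (by simp; omega) fun y hy => ?_
    obtain ⟨i, rfl⟩ := (List.mem_ofFn).1 (List.mem_of_mem_take hy)
    exact hθ _ _ (Fin.succ_ne_zero _)
  rw [sign_insertZeroPerm, chernPhiTerm, h0, hp]
  simp only [hΩ]
  generalize (List.take _ _ : List A).prod = P
  generalize (List.ofFn _ : List A).prod = R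
  have hcomm : θ 0 * (u (ρ ⟨0, by omega⟩).succ * P * R) =
      u (ρ ⟨0, by omega⟩).succ * (θ 0 * P) * R := by
    simp only [← mul_assoc, (hu (ρ ⟨0, by omega⟩).succ (θ 0)).eq]
  rw [mul_smul_comm, hcomm, Fin.val_succ, pow_succ]
  rcases Nat.even_or_odd (q : ℕ) with h | h <;> simp [h.neg_one_pow]

end Term

/-- The decomposition `Φ_k = u₁·Ξ_k − (n−2k−1)·θ₁·Υ_k` for `0 ≤ k ≤ ⌊(n−2)/2⌋`, together with
`Φ_{(n−1)/2} = u₁·Ξ_{(n−1)/2}` when `n` is odd, for central `u_i`, pairwise anticommuting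
`θ_i`, and central antisymmetric `Ω_{ij}` with `Ω_{1j} = 0`. Here `Ξ_k` and `Υ_k` are the
corresponding sums over permutations of `{2, …, n}`. -/
theorem chernPhi_decomposition (n : ℕ) (hn : 2 ≤ n) {A : Type*} [Ring A]
    (u θ : Fin n → A) (Ω : Fin n → Fin n → A)
    (hu : ∀ (i : Fin n) (a : A), Commute (u i) a)
    (hθ : ∀ i j : Fin n, i ≠ j → θ i * θ j = -(θ j * θ i))
    (hΩc : ∀ (i j : Fin n) (a : A), Commute (Ω i j) a)
    (hΩa : ∀ i j : Fin n, Ω i j = -Ω j i)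
    (hΩ1 : ∀ j : Fin n, Ω ⟨0, by omega⟩ j = 0) :
    (∀ k, ∀ hk : k ≤ (n - 2) / 2,
        chernPhi n k (by omega) u θ Ω
          = u ⟨0, by omega⟩ *
              chernPsi (n - 1) k (by omega)
                (fun i => θ (embSucc n i)) (fun i j => Ω (embSucc n i) (embSucc n j))
            - (n - 2 * k - 1) •
              (θ ⟨0, by omega⟩ *
                chernPhi (n - 1) k (by omega)
                  (fun i => u (embSucc n i)) (fun i => θ (embSucc n i))
                  (fun i j => Ω (embSucc n i) (embSucc n j)))) ∧
    (Odd n →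
      chernPhi n ((n - 1) / 2) (by omega) u θ Ω
        = u ⟨0, by omega⟩ *
            chernPsi (n - 1) ((n - 1) / 2) (by omega)
              (fun i => θ (embSucc n i)) (fun i j => Ω (embSucc n i) (embSucc n j))) := by
  obtain ⟨m, rfl⟩ : ∃ m, n = m + 2 := ⟨n - 2, by omega⟩
  have hΩl : ∀ j, Ω 0 j = 0 := hΩ1
  have hΩr : ∀ j, Ω j 0 = 0 := fun j => by rw [hΩa, hΩl, neg_zero]
  refine ⟨fun k hk => ?_, fun hodd => ?_⟩
  · have hk' : 2 * k + 1 ≤ m + 1 := by omega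
    rw [chernPhi_eq_sum_term, sum_perm_eq_sum_insertZeroPerm, Fin.sum_univ_succ,
      sum_insertZeroPerm_zero, sub_eq_add_neg]
    refine congrArg₂ _ rfl ?_
    have hterm : ∀ q : Fin (m + 1),
        ∑ ρ : Equiv.Perm (Fin (m + 1)), (Equiv.Perm.sign (insertZeroPerm q.succ ρ) : ℤ) •
          chernPhiTerm (m + 2) k (by omega) u θ Ω (insertZeroPerm q.succ ρ) =
        if (q : ℕ) < m + 1 - 2 * k then
          -(θ 0 * chernPhi (m + 1) k hk' (fun i => u i.succ) (fun i => θ i.succ)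
            (fun i j => Ω i.succ j.succ))
        else 0 := fun q => by
      split_ifs with hq
      · exact sum_insertZeroPerm_succ hk' u θ Ω hu hθ q hq
      · exact Finset.sum_eq_zero fun ρ _ => by
          rw [chernPhiTerm_insertZeroPerm_eq_zero _ u θ Ω hΩl hΩr q (by omega), smul_zero]
    rw [Finset.sum_congr rfl fun q _ => hterm q, ← Finset.sum_filter, Finset.sum_const,
      Fin.card_filter_val_lt, smul_neg,
      show min (m + 1) (m + 1 - 2 * k) = m + 2 - 2 * k - 1 by omega]
    rfl
  · rw [chernPhi_eq_sum_term, sum_perm_eq_sum_insertZeroPerm, Fin.sum_univ_succ,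
      sum_insertZeroPerm_zero, Finset.sum_eq_zero, add_zero]
    · rfl
    · intro q _
      refine Finset.sum_eq_zero fun ρ _ => ?_
      obtain ⟨r, hr⟩ := hodd
      rw [chernPhiTerm_insertZeroPerm_eq_zero _ u θ Ω hΩl hΩr q (by omega), smul_zero]
end

section
/- Let n ≥ 2 and let A be an associative ring. Let s, c ∈ A be central with s² + c² = 1; let δ ∈ A satisfy δ² = 0, δ central except that δ·θ^e_i = −θ^e_i·δ for all i; for 2 ≤ i ≤ n let u^e_i ∈ A be central and θ^e_i ∈ A satisfy θ^e_i·θ^e_j = −θ^e_j·θ^e_i for i ≠ j and (θ^e_i)² = 0; and for 2 ≤ i, j ≤ n let Ω_{ij} ∈ A be central with Ω_{ij} = −Ω_{ji}; assume moreover that s, c, the u^e_i and the Ω_{ij} commute with δ and with all θ^e_i. Set u_1 = c, u_i = s·u^e_i for 2 ≤ i ≤ n; θ_1 = −s·δ, θ_i = s·θ^e_i + c·δ·u^e_i for 2 ≤ i ≤ n; and Ω_{1j} = Ω_{j1} = 0. For 0 ≤ k ≤ ⌊(n−1)/2⌋ define Φ_k = Σ_{τ ∈ S_n} sgn(τ)·u_{τ(1)}·θ_{τ(2)}·⋯·θ_{τ(n−2k)}·Ω_{τ(n−2k+1)τ(n−2k+2)}·⋯·Ω_{τ(n−1)τ(n)},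 and, summing over all permutations ρ of {2,…,n}, Ψ^e_k = Σ_ρ sgn(ρ)·θ^e_{ρ(2)}·⋯·θ^e_{ρ(n−2k)}·Ω_{ρ(n−2k+1)ρ(n−2k+2)}·⋯·Ω_{ρ(n−1)ρ(n)} and Φ^e_k = Σ_ρ sgn(ρ)·u^e_{ρ(2)}·θ^e_{ρ(3)}·⋯·θ^e_{ρ(n−2k)}·Ω_{ρ(n−2k+1)ρ(n−2k+2)}·⋯·Ω_{ρ(n−1)ρ(n)} (the latter for 0 ≤ k ≤ ⌊(n−2)/2⌋). Then for 0 ≤ k ≤ ⌊(n−2)/2⌋ one has Φ_k = s^{n−2k−1}·c·Ψ^e_k + (n−2k−1)·s^{n−2k−2}·δ·Φ^e_k, and if n is odd then Φ_{(n−1)/2} = c·Ψ^e_{(n−1)/2}. -/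
open Finset

section OrderedProd

variable {A : Type*} [Ring A]

/-- The product `f 0 * f 1 * ⋯ * f (m - 1)`, in this order. -/
def orderedProd (f : ℕ → A) (m : ℕ) : A := ((List.range m).map f).prod

theorem orderedProd_zero (f : ℕ → A) : orderedProd f 0 = 1 := by
  simp [orderedProd]

theorem orderedProd_succ (f : ℕ → A) (m : ℕ) :
    orderedProd f (m + 1) = orderedProd f m * f m :=
  List.prod_range_succ f m

theorem orderedProd_succ' (f : ℕ → A) (m : ℕ) :
    orderedProd f (m + 1) = f 0 * orderedProd (fun i => f (i + 1)) m :=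
  List.prod_range_succ' f m

theorem orderedProd_congr {f g : ℕ → A} {m : ℕ} (h : ∀ i < m, f i = g i) :
    orderedProd f m = orderedProd g m := by
  unfold orderedProd
  congr 1
  exact List.map_congr_left fun i hi => h i (List.mem_range.1 hi)

theorem orderedProd_update_self (f : ℕ → A) (m : ℕ) (b : A) :
    orderedProd (Function.update f m b) (m + 1) = orderedProd f m * b := by
  rw [orderedProd_succ, Function.update_self]
  congr 1
  exact orderedProd_congr fun i hi => Function.update_of_ne hi.ne _ _

theorem orderedProd_update_of_lt (f : ℕ → A) {q m : ℕ} (hq : q < m) (b : A) :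
    orderedProd (Function.update f q b) (m + 1)
      = orderedProd (Function.update f q b) m * f m := by
  rw [orderedProd_succ, Function.update_of_ne hq.ne']

theorem orderedProd_mul_left {s : A} (hs : ∀ a, Commute s a) (f : ℕ → A) (m : ℕ) :
    orderedProd (fun i => s * f i) m = s ^ m * orderedProd f m := by
  induction m with
  | zero => simp [orderedProd_zero]
  | succ m ih =>
    rw [orderedProd_succ, orderedProd_succ, ih, pow_succ, mul_assoc, mul_assoc,
      ((hs (orderedProd f m)).symm).left_comm]

theorem orderedProd_update_mul_left {s : A} (hs : ∀ a, Commute s a) (f : ℕ → A) (b : A)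
    {q m : ℕ} (hq : q < m) :
    orderedProd (Function.update (fun i => s * f i) q b) m
      = s ^ (m - 1) * orderedProd (Function.update f q b) m := by
  induction m, hq using Nat.le_induction with
  | base =>
    rw [orderedProd_update_self, orderedProd_update_self, orderedProd_mul_left hs, mul_assoc,
      Nat.succ_sub_one]
  | succ m hm ih =>
    rw [orderedProd_update_of_lt _ hm, orderedProd_update_of_lt _ hm, ih, mul_assoc,
      ((hs _).symm).left_comm, ← mul_assoc, ← pow_succ, Nat.sub_add_cancel (by omega),
      Nat.add_sub_cancel]

theorem orderedProd_update_central_mul {a : A} (ha : ∀ x, Commute a x) (f : ℕ → A) (b : A)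
    {q m : ℕ} (hq : q < m) :
    orderedProd (Function.update f q (a * b)) m
      = a * orderedProd (Function.update f q b) m := by
  induction m, hq using Nat.le_induction with
  | base =>
    rw [orderedProd_update_self, orderedProd_update_self, ((ha _).symm).left_comm]
  | succ m hm ih =>
    rw [orderedProd_update_of_lt _ hm, orderedProd_update_of_lt _ hm, ih, mul_assoc]

theorem orderedProd_update_mul_eq_zero {δ : A} (hδ : δ * δ = 0) {x : ℕ → A}
    (hx : ∀ i, δ * x i = -(x i * δ)) {q m : ℕ} (hq : q < m) :
    orderedProd (Function.update x q δ) m * δ = 0 := by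
  induction m, hq using Nat.le_induction with
  | base => rw [orderedProd_update_self, mul_assoc, hδ, mul_zero]
  | succ m hm ih =>
    rw [orderedProd_update_of_lt _ hm, mul_assoc, ← neg_neg (x m * δ), ← hx, mul_neg,
      ← mul_assoc, ih, zero_mul, neg_zero]

theorem orderedProd_add_mul {δ : A} (hδ : δ * δ = 0) {x y : ℕ → A}
    (hx : ∀ i, δ * x i = -(x i * δ)) (hy : ∀ i a, Commute (y i) a) (m : ℕ) :
    orderedProd (fun i => x i + y i * δ) m
      = orderedProd x m + ∑ q ∈ range m, y q * orderedProd (Function.update x q δ) m := by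
  induction m with
  | zero => simp [orderedProd_zero]
  | succ m ih =>
    have hsum : ∀ q ∈ range m, y q * orderedProd (Function.update x q δ) (m + 1)
        = y q * orderedProd (Function.update x q δ) m * (x m + y m * δ) := by
      intro q hq
      rw [mem_range] at hq
      rw [orderedProd_update_of_lt _ hq, mul_add, mul_assoc, mul_assoc,
        ((hy m _).symm).left_comm, orderedProd_update_mul_eq_zero hδ hx hq, mul_zero, mul_zero,
        add_zero]
    rw [sum_range_succ, sum_congr rfl hsum, ← sum_mul, orderedProd_succ, ih,
      orderedProd_update_self, orderedProd_succ, add_mul, mul_add,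
      ((hy m _).symm).left_comm, add_assoc, add_comm (y m * _)]

theorem orderedProd_add_mul_mul {δ : A} (hδ : δ * δ = 0) {x y : ℕ → A}
    (hx : ∀ i, δ * x i = -(x i * δ)) (m : ℕ) :
    orderedProd (fun i => x i + y i * δ) m * δ = orderedProd x m * δ := by
  induction m with
  | zero => simp [orderedProd_zero]
  | succ m ih =>
    rw [orderedProd_succ, orderedProd_succ, mul_assoc, mul_assoc, add_mul, mul_assoc (y m), hδ,
      mul_zero, add_zero, ← neg_neg (x m * δ), ← hx, mul_neg, mul_neg, ← mul_assoc, ih, mul_assoc]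

theorem orderedProd_update_add_mul {δ : A} (hδ : δ * δ = 0) {x y : ℕ → A}
    (hx : ∀ i, δ * x i = -(x i * δ)) (hy : ∀ i a, Commute (y i) a) {q m : ℕ} (hq : q < m) :
    orderedProd (Function.update (fun i => x i + y i * δ) q δ) m
      = orderedProd (Function.update x q δ) m := by
  induction m, hq using Nat.le_induction with
  | base =>
    rw [orderedProd_update_self, orderedProd_update_self, orderedProd_add_mul_mul hδ hx]
  | succ m hm ih =>
    rw [orderedProd_update_of_lt _ hm, orderedProd_update_of_lt _ hm, ih, mul_add,
      ((hy m _).symm).left_comm, orderedProd_update_mul_eq_zero hδ hx hm, mul_zero, add_zero]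

theorem orderedProd_comp_swap {f : ℕ → A} {q m : ℕ} (hq : q + 1 < m)
    (hf : f (q + 1) * f q = -(f q * f (q + 1))) :
    orderedProd (f ∘ Equiv.swap q (q + 1)) m = -orderedProd f m := by
  induction m, hq using Nat.le_induction with
  | base =>
    have h : orderedProd (f ∘ Equiv.swap q (q + 1)) q = orderedProd f q :=
      orderedProd_congr fun i hi => by
        rw [Function.comp_apply, Equiv.swap_apply_of_ne_of_ne (by omega) (by omega)]
    simp only [orderedProd_succ, h, Function.comp_apply, Equiv.swap_apply_left,
      Equiv.swap_apply_right, mul_assoc, hf, mul_neg]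
  | succ m hm ih =>
    rw [orderedProd_succ, orderedProd_succ, ih, Function.comp_apply,
      Equiv.swap_apply_of_ne_of_ne (by omega) (by omega), neg_mul]

end OrderedProd

section ExtendZero

variable {A : Type*} [Ring A] {n : ℕ}

/-- Extension of a finite family to `ℕ` by zero. -/
def extendZero (g : Fin n → A) (i : ℕ) : A := if h : i < n then g ⟨i, h⟩ else 0

theorem extendZero_of_lt (g : Fin n → A) {i : ℕ} (h : i < n) : extendZero g i = g ⟨i, h⟩ :=
  dif_pos h

theorem extendZero_induction {p : A → Prop} (h0 : p 0) {g : Fin n → A} (hg : ∀ i, p (g i))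
    (i : ℕ) : p (extendZero g i) := by
  unfold extendZero
  split_ifs
  exacts [hg _, h0]

theorem prod_take_ofFn (g : Fin n → A) {m : ℕ} (hm : m ≤ n) :
    ((List.ofFn g).take m).prod = orderedProd (extendZero g) m := by
  unfold orderedProd
  congr 1
  refine List.ext_getElem (by simpa using hm) fun i h₁ h₂ => ?_
  have hi : i < m := by simpa using h₂
  simp [extendZero_of_lt g (hi.trans_le hm)]

theorem prod_take_tail_ofFn (g : Fin n → A) {m : ℕ} (hm : m + 1 ≤ n) :
    ((List.ofFn g).tail.take m).prod = orderedProd (fun i => extendZero g (i + 1)) m := by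
  unfold orderedProd
  congr 1
  refine List.ext_getElem (by simp; omega) fun i h₁ h₂ => ?_
  have hi : i < m := by simpa using h₂
  simp [extendZero_of_lt g (show i + 1 < n by omega)]

end ExtendZero

section SignedSums

variable {A : Type*} [Ring A]

/-- The extension of a permutation of `Fin n` to `Fin (n + 1)` fixing `0`. -/
def succPerm {n : ℕ} (e : Equiv.Perm (Fin n)) : Equiv.Perm (Fin (n + 1)) :=
  Equiv.Perm.decomposeFin.symm (0, e)

theorem succPerm_zero {n : ℕ} (e : Equiv.Perm (Fin n)) : succPerm e 0 = 0 := by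
  simp [succPerm]

theorem succPerm_succ {n : ℕ} (e : Equiv.Perm (Fin n)) (i : Fin n) :
    succPerm e i.succ = (e i).succ := by
  simp [succPerm]

theorem sign_succPerm {n : ℕ} (e : Equiv.Perm (Fin n)) :
    Equiv.Perm.sign (succPerm e) = Equiv.Perm.sign e := by
  simp [succPerm]

theorem decomposeFin_symm_eq_swap_mul {n : ℕ} (p : Fin (n + 1)) (e : Equiv.Perm (Fin n)) :
    Equiv.Perm.decomposeFin.symm (p, e) = Equiv.swap 0 p * succPerm e := by
  ext i
  refine Fin.cases ?_ (fun i => ?_) i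
  · simp [succPerm_zero]
  · simp [succPerm_succ]

theorem succPerm_inv {n : ℕ} (e : Equiv.Perm (Fin n)) : (succPerm e)⁻¹ = succPerm e⁻¹ := by
  rw [inv_eq_iff_mul_eq_one]
  ext i
  refine Fin.cases ?_ (fun i => ?_) i
  · simp [succPerm_zero]
  · simp [succPerm_succ]

/-- A signed sum over permutations of `Fin (n + 1)`, split by the position of the value `0`. -/
theorem sum_sign_smul_perm_succ {n : ℕ} (G : Equiv.Perm (Fin (n + 1)) → A) :
    ∑ τ, (Equiv.Perm.sign τ : ℤ) • G τ
      = ∑ e : Equiv.Perm (Fin n), (Equiv.Perm.sign e : ℤ) • G (succPerm e)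
        - ∑ q : Fin n, ∑ e : Equiv.Perm (Fin n),
            (Equiv.Perm.sign e : ℤ) • G (succPerm e * Equiv.swap 0 q.succ) := by
  have h : ∑ τ, (Equiv.Perm.sign τ : ℤ) • G τ
      = ∑ p : Fin (n + 1), ∑ e : Equiv.Perm (Fin n),
          (Equiv.Perm.sign (succPerm e * Equiv.swap 0 p) : ℤ) •
            G (succPerm e * Equiv.swap 0 p) := by
    rw [← Equiv.sum_comp (Equiv.inv (Equiv.Perm (Fin (n + 1)))),
      ← Equiv.Perm.decomposeFin.symm.sum_comp, Fintype.sum_prod_type]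
    refine Fintype.sum_congr _ _ fun p => ?_
    rw [← Equiv.sum_comp (Equiv.inv (Equiv.Perm (Fin n)))]
    refine Fintype.sum_congr _ _ fun e => ?_
    simp only [Equiv.inv_apply, decomposeFin_symm_eq_swap_mul, mul_inv_rev, succPerm_inv,
      inv_inv, Equiv.swap_inv]
  rw [h, Fin.sum_univ_succ, sub_eq_add_neg, ← sum_neg_distrib]
  congr 1
  · refine Fintype.sum_congr _ _ fun e => ?_
    rw [Equiv.swap_self, ← Equiv.Perm.one_def, mul_one, sign_succPerm]
  · refine Fintype.sum_congr _ _ fun q => ?_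
    rw [← sum_neg_distrib]
    refine Fintype.sum_congr _ _ fun e => ?_
    rw [Equiv.Perm.sign_mul, sign_succPerm, Equiv.Perm.sign_swap (Fin.succ_ne_zero q).symm]
    simp

/-- The product of the `k` curvature factors at the last `2 * k` positions. -/
def curvatureProd {n : ℕ} (k : ℕ) (hk : 2 * k ≤ n) (Ω : Fin n → Fin n → A)
    (τ : Fin n → Fin n) : A :=
  (List.ofFn fun j : Fin k =>
    Ω (τ ⟨n - 2 * k + 2 * (j : ℕ), by have := j.isLt; omega⟩)
      (τ ⟨n - 2 * k + 2 * (j : ℕ) + 1, by have := j.isLt; omega⟩)).prod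

theorem curvatureProd_congr {n k : ℕ} (hk : 2 * k ≤ n) (Ω : Fin n → Fin n → A)
    {τ σ : Fin n → Fin n} (h : ∀ i : Fin n, n - 2 * k ≤ i → τ i = σ i) :
    curvatureProd k hk Ω τ = curvatureProd k hk Ω σ := by
  unfold curvatureProd
  congr 2
  funext j
  rw [h _ (Nat.le_add_right _ _), h _ (by simp only; omega)]

theorem curvatureProd_eq_zero {n k : ℕ} (hk : 2 * k ≤ n) {Ω : Fin n → Fin n → A}
    {τ : Fin n → Fin n} {p : Fin n} (hp : n - 2 * k ≤ p)
    (h : ∀ i, Ω (τ p) i = 0 ∧ Ω i (τ p) = 0) :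
    curvatureProd k hk Ω τ = 0 := by
  refine List.prod_eq_zero ?_
  rw [List.mem_ofFn]
  refine ⟨⟨(p - (n - 2 * k)) / 2, by omega⟩, ?_⟩
  rcases Nat.mod_two_eq_zero_or_one (p - (n - 2 * k)) with h2 | h2
  · convert (h _).1 using 3
    ext
    simp only
    omega
  · convert (h _).2 using 3
    ext
    simp only
    omega

theorem curvatureProd_of_succ {n k : ℕ} (hk : 2 * k ≤ n) {Ω : Fin n → Fin n → A}
    {Ω' : Fin (n + 1) → Fin (n + 1) → A} (hΩ : ∀ i j, Ω' i.succ j.succ = Ω i j)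
    {τ : Fin (n + 1) → Fin (n + 1)} {e : Fin n → Fin n}
    (h : ∀ i : Fin n, n - 2 * k ≤ i → τ i.succ = (e i).succ) :
    curvatureProd k (by omega) Ω' τ = curvatureProd k hk Ω e := by
  unfold curvatureProd
  congr 2
  funext j
  rw [← hΩ, ← h _ (Nat.le_add_right _ _), ← h _ (by simp only; omega)]
  congr 2 <;> ext <;> simp <;> omega

theorem chernPsi_eq {m k : ℕ} (hk : 2 * k ≤ m) (θ : Fin m → A) (Ω : Fin m → Fin m → A) :
    chernPsi m k hk θ Ω = ∑ ρ : Equiv.Perm (Fin m), (Equiv.Perm.sign ρ : ℤ) •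
      (orderedProd (extendZero (θ ∘ ρ)) (m - 2 * k) * curvatureProd k hk Ω ρ) := by
  unfold chernPsi
  refine Fintype.sum_congr _ _ fun ρ => ?_
  rw [prod_take_ofFn _ (Nat.sub_le _ _)]
  rfl

theorem chernPhi_eq {n k : ℕ} (hk : 2 * k + 1 ≤ n) (u θ : Fin n → A)
    (Ω : Fin n → Fin n → A) :
    chernPhi n k hk u θ Ω = ∑ τ : Equiv.Perm (Fin n), (Equiv.Perm.sign τ : ℤ) •
      (u (τ ⟨0, by omega⟩) *
        orderedProd (fun i => extendZero (θ ∘ τ) (i + 1)) (n - 2 * k - 1) *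
          curvatureProd k (by omega) Ω τ) := by
  unfold chernPhi
  refine Fintype.sum_congr _ _ fun τ => ?_
  rw [prod_take_tail_ofFn _ (by omega)]
  rfl

/-- The signed sum in which the `q`-th factor of the ordered product of the `θ`s is replaced
by `δ`, and the index it carried is given to `u`. -/
def insertedSum {n : ℕ} (k : ℕ) (hk : 2 * k ≤ n) (δ : A) (u θ : Fin n → A)
    (Ω : Fin n → Fin n → A) (q : ℕ) : A :=
  ∑ e : Equiv.Perm (Fin n), (Equiv.Perm.sign e : ℤ) •
    (extendZero (u ∘ e) q *
      orderedProd (Function.update (extendZero (θ ∘ e)) q δ) (n - 2 * k) *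
        curvatureProd k hk Ω e)

theorem insertedSum_succ {n k : ℕ} (hk : 2 * k ≤ n) {δ : A} (u : Fin n → A) {θ : Fin n → A}
    (Ω : Fin n → Fin n → A) (hδθ : ∀ i, δ * θ i = -(θ i * δ)) {q : ℕ}
    (hq : q + 1 < n - 2 * k) :
    insertedSum k hk δ u θ Ω (q + 1) = insertedSum k hk δ u θ Ω q := by
  have hq0 : q < n := by omega
  have hq1 : q + 1 < n := by omega
  set σ : Equiv.Perm (Fin n) := Equiv.swap ⟨q, hq0⟩ ⟨q + 1, hq1⟩ with hσ
  have hsign : Equiv.Perm.sign σ = -1 := Equiv.Perm.sign_swap (by simp)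
  unfold insertedSum
  rw [← Equiv.sum_comp (Equiv.mulRight σ)]
  refine Fintype.sum_congr _ _ fun e => ?_
  have hu : extendZero (u ∘ (e * σ : Equiv.Perm (Fin n))) (q + 1) = extendZero (u ∘ e) q := by
    rw [extendZero_of_lt _ hq1, extendZero_of_lt _ hq0]
    simp [hσ]
  have hW : curvatureProd k hk Ω (e * σ : Equiv.Perm (Fin n)) = curvatureProd k hk Ω e :=
    curvatureProd_congr hk Ω fun i hi => by
      rw [Equiv.Perm.mul_apply, hσ, Equiv.swap_apply_of_ne_of_ne] <;>
        (rw [Ne, Fin.ext_iff]; simp only; omega)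
  have hP : orderedProd (Function.update (extendZero (θ ∘ (e * σ : Equiv.Perm (Fin n))))
        (q + 1) δ) (n - 2 * k)
      = -orderedProd (Function.update (extendZero (θ ∘ e)) q δ) (n - 2 * k) := by
    rw [← orderedProd_comp_swap hq]
    · refine orderedProd_congr fun i hi => ?_
      have hin : i < n := by omega
      rcases eq_or_ne i q with rfl | h0
      · simp [extendZero_of_lt, hin, hq1, hσ]
      rcases eq_or_ne i (q + 1) with rfl | h1
      · simp
      · rw [Function.comp_apply, Equiv.swap_apply_of_ne_of_ne h0 h1,
          Function.update_of_ne h0, Function.update_of_ne h1, extendZero_of_lt _ hin,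
          extendZero_of_lt _ hin, Function.comp_apply, Function.comp_apply,
          Equiv.Perm.mul_apply, hσ, Equiv.swap_apply_of_ne_of_ne] <;> simpa
    · rw [Function.update_self, Function.update_of_ne (by omega), extendZero_of_lt _ hq1,
        Function.comp_apply, hδθ, neg_neg]
  simp only [Equiv.coe_mulRight]
  rw [hu, hW, hP, Equiv.Perm.sign_mul, hsign]
  simp

theorem insertedSum_eq {n k : ℕ} (hk : 2 * k + 1 ≤ n) {δ : A} {u θ : Fin n → A}
    (Ω : Fin n → Fin n → A) (hδθ : ∀ i, δ * θ i = -(θ i * δ)) (hδu : ∀ i, Commute δ (u i))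
    {q : ℕ} (hq : q < n - 2 * k) :
    insertedSum k (by omega) δ u θ Ω q = δ * chernPhi n k hk u θ Ω := by
  induction q with
  | succ q ih => rw [insertedSum_succ _ u Ω hδθ hq, ih (by omega)]
  | zero =>
    rw [chernPhi_eq, mul_sum]
    refine Fintype.sum_congr _ _ fun e => ?_
    obtain ⟨m, hm⟩ : ∃ m, n - 2 * k = m + 1 := ⟨n - 2 * k - 1, by omega⟩
    rw [hm, Nat.add_sub_cancel, orderedProd_succ', Function.update_self,
      extendZero_of_lt _ (by omega : 0 < n), mul_smul_comm]
    simp only [Function.comp_apply, ne_eq, Nat.add_eq_zero_iff, one_ne_zero, and_false,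
      not_false_eq_true, Function.update_of_ne, mul_assoc, (hδu _).left_comm]

/-- `chernPhi` of the pulled-back data as `chernPsi` plus the sums with one `θ` replaced by `δ`,
valid also when no `θ` occurs. -/
theorem chernPhi_succ_eq {n k : ℕ} (hk : 2 * k ≤ n) {s c δ : A} {ue θe : Fin n → A}
    {Ω : Fin n → Fin n → A} (hs : ∀ a : A, Commute s a) (hc : ∀ a : A, Commute c a)
    (hsc : s ^ 2 + c ^ 2 = 1) (hδ2 : δ * δ = 0) (hδθ : ∀ i, δ * θe i = -(θe i * δ))
    (hue : ∀ i (a : A), Commute (ue i) a)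
    {u θ : Fin (n + 1) → A} {Ω' : Fin (n + 1) → Fin (n + 1) → A}
    (hu0 : u 0 = c) (hui : ∀ i : Fin n, u i.succ = s * ue i)
    (hθ0 : θ 0 = -(s * δ)) (hθi : ∀ i : Fin n, θ i.succ = s * θe i + c * δ * ue i)
    (hΩ'0 : ∀ j, Ω' 0 j = 0 ∧ Ω' j 0 = 0)
    (hΩ'i : ∀ i j : Fin n, Ω' i.succ j.succ = Ω i j) :
    chernPhi (n + 1) k (by omega) u θ Ω'
      = s ^ (n - 2 * k) * c * chernPsi n k hk θe Ω
        + ∑ q ∈ range (n - 2 * k),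
            s ^ (n - 2 * k - 1) * insertedSum k hk δ ue θe Ω q := by
  have hm : n + 1 - 2 * k - 1 = n - 2 * k := by omega
  have hx : ∀ (e : Equiv.Perm (Fin n)) i,
      δ * (s * extendZero (θe ∘ e) i) = -(s * extendZero (θe ∘ e) i * δ) := fun e i => by
    rw [((hs δ).symm).left_comm, mul_assoc, ← mul_neg]
    congr 1
    exact extendZero_induction (p := fun x => δ * x = -(x * δ)) (by simp) (fun _ => hδθ _) i
  have hU : ∀ (e : Equiv.Perm (Fin n)) i a, Commute (extendZero (ue ∘ e) i) a := fun e i a =>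
    extendZero_induction (p := fun x => Commute x a) (Commute.zero_left a) (fun _ => hue _ _) i
  have hy : ∀ (e : Equiv.Perm (Fin n)) i a, Commute (c * extendZero (ue ∘ e) i) a :=
    fun e i a => (hc a).mul_left (hU e i a)
  have hθsucc : ∀ i : Fin n, θ i.succ = s * θe i + c * ue i * δ := fun i => by
    rw [hθi, mul_assoc, mul_assoc, (hue i δ).eq]
  -- the permutations fixing `0`
  have hfix : ∀ e : Equiv.Perm (Fin n),
      u (succPerm e 0) *
          orderedProd (fun i => extendZero (θ ∘ succPerm e) (i + 1)) (n - 2 * k) *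
        curvatureProd k (by omega) Ω' (succPerm e)
      = s ^ (n - 2 * k) * c *
          (orderedProd (extendZero (θe ∘ e)) (n - 2 * k) * curvatureProd k hk Ω e)
        + ∑ q ∈ range (n - 2 * k), c ^ 2 * (s ^ (n - 2 * k - 1) * (extendZero (ue ∘ e) q *
            orderedProd (Function.update (extendZero (θe ∘ e)) q δ) (n - 2 * k) *
              curvatureProd k hk Ω e)) := fun e => by
    have hP : orderedProd (fun i => extendZero (θ ∘ succPerm e) (i + 1)) (n - 2 * k)
        = orderedProd (fun i => s * extendZero (θe ∘ e) i + c * extendZero (ue ∘ e) i * δ)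
            (n - 2 * k) := orderedProd_congr fun i hi => by
      have hin : i < n := by omega
      rw [extendZero_of_lt _ (Nat.succ_lt_succ hin), extendZero_of_lt _ hin,
        extendZero_of_lt _ hin]
      exact (congrArg θ (succPerm_succ e ⟨i, hin⟩)).trans (hθsucc _)
    rw [succPerm_zero, hu0, curvatureProd_of_succ hk hΩ'i fun i _ => succPerm_succ e i, hP,
      orderedProd_add_mul hδ2 (hx e) (hy e), orderedProd_mul_left hs, mul_add, add_mul, mul_sum,
      sum_mul]
    congr 1
    · rw [← mul_assoc c, (hc _).eq, mul_assoc (_ * c)]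
    · refine sum_congr rfl fun q hq => ?_
      rw [orderedProd_update_mul_left hs _ _ (mem_range.1 hq), pow_two]
      simp only [mul_assoc]
      rw [(hU e q (s ^ (n - 2 * k - 1))).left_comm]
  -- the permutations sending a later position to `0`
  have hmove : ∀ (q : Fin n) (e : Equiv.Perm (Fin n)),
      u ((succPerm e * Equiv.swap 0 q.succ) 0) *
          orderedProd (fun i => extendZero
            (θ ∘ (succPerm e * Equiv.swap 0 q.succ : Equiv.Perm (Fin (n + 1)))) (i + 1))
            (n - 2 * k) *
        curvatureProd k (by omega) Ω'
          (succPerm e * Equiv.swap 0 q.succ : Equiv.Perm (Fin (n + 1)))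
      = if (q : ℕ) < n - 2 * k then
          -(s ^ 2 * (s ^ (n - 2 * k - 1) * (extendZero (ue ∘ e) q *
            orderedProd (Function.update (extendZero (θe ∘ e)) q δ) (n - 2 * k) *
              curvatureProd k hk Ω e)))
        else 0 := fun q e => by
    have hsucc : ∀ i : Fin n, i ≠ q →
        (succPerm e * Equiv.swap 0 q.succ) i.succ = (e i).succ := fun i hi => by
      rw [Equiv.Perm.mul_apply, Equiv.swap_apply_of_ne_of_ne (Fin.succ_ne_zero i)
        (fun h => hi (Fin.succ_injective _ h)), succPerm_succ]
    have hq0 : (succPerm e * Equiv.swap 0 q.succ) q.succ = 0 := by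
      rw [Equiv.Perm.mul_apply, Equiv.swap_apply_right, succPerm_zero]
    have h0 : (succPerm e * Equiv.swap 0 q.succ) 0 = (e q).succ := by
      rw [Equiv.Perm.mul_apply, Equiv.swap_apply_left, succPerm_succ]
    split_ifs with hq
    · have hP : orderedProd (fun i => extendZero
            (θ ∘ (succPerm e * Equiv.swap 0 q.succ : Equiv.Perm (Fin (n + 1)))) (i + 1))
            (n - 2 * k)
          = orderedProd (Function.update
              (fun i => s * extendZero (θe ∘ e) i + c * extendZero (ue ∘ e) i * δ) q (-s * δ))
              (n - 2 * k) := orderedProd_congr fun i hi => by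
        have hin : i < n := by omega
        rw [extendZero_of_lt _ (Nat.succ_lt_succ hin)]
        rcases eq_or_ne i q with rfl | hne
        · rw [Function.update_self, neg_mul, ← hθ0]
          exact congrArg θ hq0
        · rw [Function.update_of_ne hne, extendZero_of_lt _ hin, extendZero_of_lt _ hin]
          exact (congrArg θ (hsucc ⟨i, hin⟩ fun h => hne (congrArg Fin.val h))).trans (hθsucc _)
      rw [h0, hui, hP, orderedProd_update_central_mul (fun a => (hs a).neg_left) _ _ hq,
        orderedProd_update_add_mul hδ2 (hx e) (hy e) hq, orderedProd_update_mul_left hs _ _ hq,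
        curvatureProd_of_succ hk hΩ'i fun i hi => hsucc i (by rintro rfl; omega),
        extendZero_of_lt _ q.isLt, pow_two]
      simp only [mul_assoc, neg_mul, mul_neg, Function.comp_apply, Fin.eta]
      rw [((hs (ue (e q))).symm).left_comm, (hue _ (s ^ (n - 2 * k - 1))).left_comm]
    · rw [curvatureProd_eq_zero (p := q.succ) _ (by simp; omega), mul_zero]
      intro i
      rw [hq0]
      exact hΩ'0 i
  have hsplit : ∀ x : A, x = c ^ 2 * x + s ^ 2 * x := fun x => by
    rw [← add_mul, add_comm, hsc, one_mul]
  have hrange : ∀ F : ℕ → A, ∑ q : Fin n, (if (q : ℕ) < n - 2 * k then F q else 0)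
      = ∑ q ∈ range (n - 2 * k), F q := fun F => by
    rw [Fin.sum_univ_eq_sum_range (fun q => if q < n - 2 * k then F q else 0), ← sum_filter]
    congr 1
    ext q
    simp only [mem_filter, mem_range]
    omega
  rw [chernPhi_eq, hm, sum_sign_smul_perm_succ]
  simp only [Fin.zero_eta, hfix, hmove, smul_add, sum_add_distrib]
  rw [chernPsi_eq, mul_sum, add_sub_assoc]
  simp only [mul_smul_comm]
  congr 1
  have hF : ∀ q : Fin n, (∑ e : Equiv.Perm (Fin n), (Equiv.Perm.sign e : ℤ) •
      (if (q : ℕ) < n - 2 * k then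
          -(s ^ 2 * (s ^ (n - 2 * k - 1) * (extendZero (ue ∘ e) q *
            orderedProd (Function.update (extendZero (θe ∘ e)) q δ) (n - 2 * k) *
              curvatureProd k hk Ω e)))
        else 0))
      = if (q : ℕ) < n - 2 * k then
          -(s ^ 2 * (s ^ (n - 2 * k - 1) * insertedSum k hk δ ue θe Ω q)) else 0 := fun q => by
    split_ifs
    · simp only [insertedSum, mul_sum, mul_smul_comm, smul_neg, sum_neg_distrib]
    · simp
  rw [Fintype.sum_congr _ _ hF,
    hrange (fun q => -(s ^ 2 * (s ^ (n - 2 * k - 1) * insertedSum k hk δ ue θe Ω q))),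
    sum_neg_distrib, sub_neg_eq_add]
  simp only [smul_sum]
  rw [sum_comm, ← sum_add_distrib]
  refine sum_congr rfl fun q _ => ?_
  refine Eq.trans ?_ (hsplit (s ^ (n - 2 * k - 1) * insertedSum k hk δ ue θe Ω q)).symm
  congr 1
  simp only [insertedSum, mul_sum, mul_smul_comm]

end SignedSums

/-- On the boundary tangent sphere bundle with a locally product metric, with `s = sin φ`,
`c = cos φ`, `δ = dφ`, and `u₁ = c`, `u_i = s·uᵉ_i`, `θ₁ = −s·δ`, `θ_i = s·θᵉ_i + c·δ·uᵉ_i`,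
`Ω_{1j} = Ω_{j1} = 0`, one has
`Φ_k = s^{n−2k−1}·c·Ψᵉ_k + (n−2k−1)·s^{n−2k−2}·δ·Φᵉ_k` for `0 ≤ k ≤ ⌊(n−2)/2⌋`, and
`Φ_{(n−1)/2} = c·Ψᵉ_{(n−1)/2}` when `n` is odd. -/
theorem chernPhi_pullback_formula (n : ℕ) (hn : 2 ≤ n) {A : Type*} [Ring A]
    (s c δ : A) (ue θe : Fin (n - 1) → A) (Ω : Fin (n - 1) → Fin (n - 1) → A)
    (hs : ∀ a : A, Commute s a) (hc : ∀ a : A, Commute c a)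
    (hsc : s ^ 2 + c ^ 2 = 1)
    (hδ2 : δ * δ = 0)
    (hδθe : ∀ i : Fin (n - 1), δ * θe i = -(θe i * δ))
    (hδs : Commute δ s) (hδc : Commute δ c)
    (hδue : ∀ i : Fin (n - 1), Commute δ (ue i))
    (hδΩ : ∀ i j : Fin (n - 1), Commute δ (Ω i j))
    (hue : ∀ (i : Fin (n - 1)) (a : A), Commute (ue i) a)
    (hθe : ∀ i j : Fin (n - 1), i ≠ j → θe i * θe j = -(θe j * θe i))
    (hθe2 : ∀ i : Fin (n - 1), θe i * θe i = 0)
    (hθes : ∀ i : Fin (n - 1), Commute (θe i) s)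
    (hθec : ∀ i : Fin (n - 1), Commute (θe i) c)
    (hθeue : ∀ i j : Fin (n - 1), Commute (θe i) (ue j))
    (hθeΩ : ∀ (i j k : Fin (n - 1)), Commute (θe i) (Ω j k))
    (hΩc : ∀ (i j : Fin (n - 1)) (a : A), Commute (Ω i j) a)
    (hΩa : ∀ i j : Fin (n - 1), Ω i j = -Ω j i)
    (u θ : Fin n → A) (Ω' : Fin n → Fin n → A)
    (hu0 : u ⟨0, by omega⟩ = c)
    (hui : ∀ i : Fin (n - 1), u (embSucc n i) = s * ue i)
    (hθ0 : θ ⟨0, by omega⟩ = -(s * δ))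
    (hθi : ∀ i : Fin (n - 1), θ (embSucc n i) = s * θe i + c * δ * ue i)
    (hΩ'0 : ∀ j : Fin n, Ω' ⟨0, by omega⟩ j = 0 ∧ Ω' j ⟨0, by omega⟩ = 0)
    (hΩ'i : ∀ i j : Fin (n - 1), Ω' (embSucc n i) (embSucc n j) = Ω i j) :
    (∀ k, ∀ hk : k ≤ (n - 2) / 2,
      chernPhi n k (by omega) u θ Ω'
        = s ^ (n - 2 * k - 1) * c * chernPsi (n - 1) k (by omega) θe Ω
          + (n - 2 * k - 1) •
            (s ^ (n - 2 * k - 2) * δ * chernPhi (n - 1) k (by omega) ue θe Ω)) ∧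
    (Odd n →
      chernPhi n ((n - 1) / 2) (by omega) u θ Ω'
        = c * chernPsi (n - 1) ((n - 1) / 2) (by omega) θe Ω) := by
  obtain ⟨N, rfl⟩ : ∃ N, n = N + 1 := ⟨n - 1, by omega⟩
  have key : ∀ k (hk : 2 * k ≤ N), chernPhi (N + 1) k (by omega) u θ Ω'
      = s ^ (N - 2 * k) * c * chernPsi N k hk θe Ω
        + ∑ q ∈ range (N - 2 * k), s ^ (N - 2 * k - 1) * insertedSum k hk δ ue θe Ω q :=
    fun k hk => chernPhi_succ_eq hk hs hc hsc hδ2 hδθe hue hu0 hui hθ0 hθi hΩ'0 hΩ'i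
  refine ⟨fun k hk => ?_, fun hodd => ?_⟩
  · have h1 : N + 1 - 2 * k - 1 = N - 2 * k := by omega
    have h2 : N + 1 - 2 * k - 2 = N - 2 * k - 1 := by omega
    have hk' : 2 * k + 1 ≤ N := by omega
    rw [key k (by omega), h1, h2]
    congr 1
    rw [sum_congr rfl fun q hq => congrArg (s ^ (N - 2 * k - 1) * ·)
      (insertedSum_eq hk' Ω hδθe hδue (mem_range.1 hq)), sum_const, card_range, mul_assoc]
    rfl
  · have hN : N - 2 * ((N + 1 - 1) / 2) = 0 := by
      obtain ⟨j, hj⟩ := hodd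
      omega
    rw [key _ (by omega), hN, range_zero, sum_empty, add_zero, pow_zero, one_mul]
    rfl
end

section
/- In the setting of the previous algebraic statement (n ≥ 2; central s, c with s² + c² = 1; δ with δ² = 0 anticommuting with the θ^e_i and commuting with all even elements; central u^e_i; pairwise anticommuting θ^e_i with (θ^e_i)² = 0; u_1 = c, u_i = s·u^e_i, θ_1 = −s·δ, θ_i = s·θ^e_i + c·δ·u^e_i), assume in addition that Σ_{i=2}^n (u^e_i)² = 1 and Σ_{i=2}^n u^e_i·θ^e_i = 0. Then Φ_0 = Σ_{τ ∈ S_n} sgn(τ)·u_{τ(1)}·θ_{τ(2)}·⋯·θ_{τ(n)} satisfies Φ_0 = (n−1)·s^{n−2}·δ·Φ^e_0, where Φ^e_0 = Σ_ρ sgn(ρ)·u^e_{ρ(2)}·θ^e_{ρ(3)}·⋯·θ^e_{ρ(n)} is summed over all permutations ρ of {2,…,n}. -/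
open Finset

/-- The signed sum `∑ i, (-1)^i u_i θ_0 ⋯ θ_{i-1} θ_{i+1} ⋯ θ_m`. -/
def contractedProd {R A : Type*} [Ring R] [Ring A] [Module R A] {m : ℕ}
    (u : Fin (m + 1) → R) (θ : Fin (m + 1) → A) : A :=
  ∑ i : Fin (m + 1), (-1 : ℤ) ^ (i : ℕ) • (u i • (List.ofFn fun j => θ (i.succAbove j)).prod)

theorem mul_prod_ofFn_succAbove {A : Type*} [Ring A] {m : ℕ} (θ : Fin (m + 1) → A)
    (hθ : ∀ i j, i ≠ j → θ i * θ j = -(θ j * θ i)) (p : Fin (m + 1)) :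
    θ p * (List.ofFn fun j => θ (p.succAbove j)).prod
      = (-1 : ℤ) ^ (p : ℕ) • (List.ofFn θ).prod := by
  induction m with
  | zero =>
    obtain rfl : p = 0 := Fin.fin_one_eq_zero p
    simp
  | succ m ih =>
    cases p using Fin.cases with
    | zero => simp [List.ofFn_succ]
    | succ p =>
      have h := ih (fun j => θ j.succ) (fun i j hij => hθ _ _ (by simpa using hij)) p
      rw [List.ofFn_succ, List.prod_cons, ← mul_assoc, Fin.succ_succAbove_zero,
        hθ _ _ (Fin.succ_ne_zero p), List.ofFn_succ (f := θ), List.prod_cons]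
      simp only [Fin.succ_succAbove_succ, neg_mul, mul_assoc, h]
      simp [pow_succ, -zsmul_eq_mul]

theorem exists_perm_succAbove {m : ℕ} (τ : Equiv.Perm (Fin (m + 1))) :
    ∃ e : Equiv.Perm (Fin m), (∀ j, τ j.succ = (τ 0).succAbove (e j)) ∧
      (Equiv.Perm.sign τ : ℤ) = (-1) ^ (τ 0 : ℕ) * Equiv.Perm.sign e := by
  obtain ⟨⟨p, e⟩, h⟩ := Equiv.Perm.decomposeFin.symm.surjective ((τ 0).cycleRange * τ)
  have h0 := congrArg (fun f => f 0) h
  simp only [Equiv.Perm.decomposeFin_symm_apply_zero, Equiv.Perm.mul_apply,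
    Fin.cycleRange_self] at h0
  subst h0
  refine ⟨e, fun j => ?_, ?_⟩
  · have hj := congrArg (fun f => f j.succ) h
    simp only [Equiv.Perm.decomposeFin_symm_apply_succ, Equiv.swap_self, Equiv.refl_apply,
      Equiv.Perm.mul_apply] at hj
    rw [← Fin.cycleRange_symm_succ, hj, Equiv.symm_apply_apply]
  · have hsgn := congrArg Equiv.Perm.sign h
    rw [Equiv.Perm.decomposeFin.symm_sign, Equiv.Perm.sign_mul, Fin.sign_cycleRange] at hsgn
    have hu : Equiv.Perm.sign τ = (-1) ^ (τ 0 : ℕ) * Equiv.Perm.sign e := by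
      simp only [if_true, one_mul] at hsgn
      rw [hsgn, ← mul_assoc, ← mul_pow]
      simp
    rw [hu]
    simp

theorem prod_ofFn_perm {A : Type*} [Ring A] {m : ℕ} (θ : Fin m → A)
    (hθ : ∀ i j, i ≠ j → θ i * θ j = -(θ j * θ i)) (τ : Equiv.Perm (Fin m)) :
    (List.ofFn fun i => θ (τ i)).prod = (Equiv.Perm.sign τ : ℤ) • (List.ofFn θ).prod := by
  induction m with
  | zero => simp [Subsingleton.elim τ 1]
  | succ m ih =>
    obtain ⟨e, he, hsgn⟩ := exists_perm_succAbove τ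
    rw [List.ofFn_succ, List.prod_cons]
    simp only [he]
    rw [ih (fun j => θ ((τ 0).succAbove j))
      (fun i j hij => hθ _ _ (Fin.succAbove_right_injective.ne hij)) e, mul_smul_comm,
      mul_prod_ofFn_succAbove θ hθ, smul_smul, hsgn, mul_comm]

theorem sum_perm_apply_zero {A : Type*} [AddCommMonoid A] {m : ℕ} (f : Fin (m + 1) → A) :
    ∑ τ : Equiv.Perm (Fin (m + 1)), f (τ 0) = m.factorial • ∑ p, f p := by
  rw [← Equiv.Perm.decomposeFin.symm.sum_comp, Fintype.sum_prod_type]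
  simp [Fintype.card_perm, Finset.smul_sum]

section
variable {R A : Type*} [CommRing R] [Ring A] [Module R A]

theorem sum_perm_eq_factorial_smul {m : ℕ} (u : Fin (m + 1) → R) (θ : Fin (m + 1) → A)
    (hθ : ∀ i j, i ≠ j → θ i * θ j = -(θ j * θ i)) :
    ∑ τ : Equiv.Perm (Fin (m + 1)), (Equiv.Perm.sign τ : ℤ) •
        (u (τ 0) • ((List.ofFn fun i => θ (τ i)).tail).prod)
      = m.factorial • contractedProd u θ := by
  rw [contractedProd, ← sum_perm_apply_zero]
  refine Finset.sum_congr rfl fun τ _ => ?_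
  obtain ⟨e, he, hsgn⟩ := exists_perm_succAbove τ
  rw [List.ofFn_succ, List.tail_cons]
  simp only [he]
  rw [prod_ofFn_perm (fun j => θ ((τ 0).succAbove j))
      (fun i j hij => hθ _ _ (Fin.succAbove_right_injective.ne hij)) e, hsgn,
    smul_comm (u (τ 0)) (_ : ℤ), smul_smul, mul_assoc, ← Units.val_mul, Int.units_mul_self]
  simp

theorem contractedProd_zero (u : Fin 1 → R) (θ : Fin 1 → A) :
    contractedProd u θ = u 0 • (1 : A) := by
  simp [contractedProd]

variable [SMulCommClass R A A]

theorem contractedProd_succ {m : ℕ} (u : Fin (m + 2) → R) (θ : Fin (m + 2) → A) :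
    contractedProd u θ = u 0 • (List.ofFn fun j : Fin (m + 1) => θ j.succ).prod
      - θ 0 * contractedProd (fun j => u j.succ) (fun j => θ j.succ) := by
  rw [contractedProd, Fin.sum_univ_succ, contractedProd, Finset.mul_sum, sub_eq_add_neg,
    ← Finset.sum_neg_distrib]
  congr 1
  · simp
  · refine Finset.sum_congr rfl fun i _ => ?_
    rw [List.ofFn_succ, List.prod_cons]
    simp [pow_succ, mul_smul_comm, -zsmul_eq_mul]

theorem mul_prod_ofFn_eq_zero {m : ℕ} (θ : Fin m → A)
    (hθ : ∀ i j, i ≠ j → θ i * θ j = -(θ j * θ i)) (hθ2 : ∀ i, θ i * θ i = 0) (p : Fin m) :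
    θ p * (List.ofFn θ).prod = 0 := by
  cases m with
  | zero => exact p.elim0
  | succ m =>
    have h := congrArg (θ p * ·) (mul_prod_ofFn_succAbove θ hθ p)
    simp only [← mul_assoc, hθ2, zero_mul, mul_smul_comm] at h
    have h' := congrArg ((-1 : ℤ) ^ (p : ℕ) • ·) h
    simpa [smul_smul, ← mul_pow] using h'.symm

variable [IsScalarTower R A A]

theorem sum_smul_mul_contractedProd {m : ℕ} (u v : Fin (m + 1) → R) (θ : Fin (m + 1) → A)
    (hθ : ∀ i j, i ≠ j → θ i * θ j = -(θ j * θ i)) (hθ2 : ∀ i, θ i * θ i = 0) :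
    (∑ i, u i • θ i) * contractedProd v θ = (∑ i, u i * v i) • (List.ofFn θ).prod := by
  induction m with
  | zero => simp [contractedProd_zero, smul_smul, mul_comm]
  | succ m ih =>
    have hθ' : ∀ i j : Fin (m + 1), i ≠ j → θ i.succ * θ j.succ = -(θ j.succ * θ i.succ) :=
      fun i j hij => hθ _ _ (by simpa using hij)
    have h := ih (fun j => u j.succ) (fun j => v j.succ) (fun j => θ j.succ) hθ'
      (fun i => hθ2 _)
    have hQ : (∑ i : Fin (m + 1), u i.succ • θ i.succ)
        * (List.ofFn fun j : Fin (m + 1) => θ j.succ).prod = 0 := by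
      rw [Finset.sum_mul]
      refine Finset.sum_eq_zero fun i _ => ?_
      rw [smul_mul_assoc, mul_prod_ofFn_eq_zero (fun j : Fin (m + 1) => θ j.succ) hθ'
        (fun i => hθ2 _), smul_zero]
    have hX : (∑ i : Fin (m + 1), u i.succ • θ i.succ) * θ 0
        = -(θ 0 * ∑ i : Fin (m + 1), u i.succ • θ i.succ) := by
      rw [Finset.sum_mul, Finset.mul_sum, ← Finset.sum_neg_distrib]
      refine Finset.sum_congr rfl fun i _ => ?_
      rw [smul_mul_assoc, hθ _ _ (Fin.succ_ne_zero i), mul_smul_comm, smul_neg]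
    rw [contractedProd_succ, Fin.sum_univ_succ (fun i => u i • θ i),
      Fin.sum_univ_succ (fun i => u i * v i), List.ofFn_succ (f := θ),
      List.prod_cons, add_mul, mul_sub, mul_sub, mul_smul_comm, mul_smul_comm, hQ,
      ← mul_assoc (∑ i : Fin (m + 1), u i.succ • θ i.succ), hX, neg_mul, mul_assoc, h,
      smul_mul_assoc, smul_mul_assoc, ← mul_assoc (θ 0) (θ 0), hθ2, mul_smul_comm]
    simp only [zero_mul]
    module

theorem prod_ofFn_eq_zero {m : ℕ} (u : Fin (m + 1) → R) (θ : Fin (m + 1) → A)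
    (hθ : ∀ i j, i ≠ j → θ i * θ j = -(θ j * θ i)) (hθ2 : ∀ i, θ i * θ i = 0)
    (hsum2 : ∑ i, u i ^ 2 = 1) (hsum1 : ∑ i, u i • θ i = 0) : (List.ofFn θ).prod = 0 := by
  have h := sum_smul_mul_contractedProd u u θ hθ hθ2
  simp only [← pow_two] at h
  rw [hsum1, hsum2, zero_mul, one_smul] at h
  exact h.symm

theorem prod_ofFn_smul_add {m : ℕ} (s c : R) (δ : A) (u : Fin (m + 1) → R)
    (θ : Fin (m + 1) → A) (hδ2 : δ * δ = 0) (hδθ : ∀ i, δ * θ i = -(θ i * δ)) :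
    (List.ofFn fun i => s • θ i + (c * u i) • δ).prod
      = s ^ (m + 1) • (List.ofFn θ).prod + (c * s ^ m) • (δ * contractedProd u θ) := by
  induction m with
  | zero => simp [contractedProd_zero, smul_smul]
  | succ m ih =>
    rw [List.ofFn_succ, List.prod_cons, ih (fun j => u j.succ) (fun j => θ j.succ)
      (fun i => hδθ _), contractedProd_succ, List.ofFn_succ (f := θ), List.prod_cons]
    have h1 : ∀ x, θ 0 * (δ * x) = -(δ * (θ 0 * x)) := fun x => by
      rw [← mul_assoc, ← mul_assoc, hδθ, neg_mul, neg_neg]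
    have h2 : ∀ x, δ * (δ * x) = 0 := fun x => by rw [← mul_assoc, hδ2, zero_mul]
    simp only [add_mul, mul_add, mul_sub, smul_mul_assoc, mul_smul_comm, h1, h2]
    module

theorem mul_contractedProd_smul_add {m : ℕ} (s c : R) (δ : A) (u : Fin (m + 1) → R)
    (θ : Fin (m + 1) → A) (hδ2 : δ * δ = 0) (hδθ : ∀ i, δ * θ i = -(θ i * δ)) :
    δ * contractedProd (fun i => s * u i) (fun i => s • θ i + (c * u i) • δ)
      = s ^ (m + 1) • (δ * contractedProd u θ) := by
  induction m with
  | zero => simp [contractedProd_zero, smul_smul]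
  | succ m ih =>
    have h2 : ∀ x, δ * (δ * x) = 0 := fun x => by rw [← mul_assoc, hδ2, zero_mul]
    have h1 : ∀ x, δ * (θ 0 * x) = -(θ 0 * (δ * x)) := fun x => by
      rw [← mul_assoc, ← mul_assoc, hδθ, neg_mul]
    rw [contractedProd_succ, contractedProd_succ, prod_ofFn_smul_add s c δ (fun j => u j.succ)
      (fun j => θ j.succ) hδ2 (fun i => hδθ _)]
    simp only [add_mul, mul_add, mul_sub, smul_mul_assoc, mul_smul_comm, h1, h2,
      ih (fun j => u j.succ) (fun j => θ j.succ) (fun i => hδθ _)]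
    module

theorem contractedProd_cons {m : ℕ} (s c : R) (δ : A) (u : Fin (m + 1) → R)
    (θ : Fin (m + 1) → A) (hsc : s ^ 2 + c ^ 2 = 1) (hδ2 : δ * δ = 0)
    (hδθ : ∀ i, δ * θ i = -(θ i * δ)) (hprod : (List.ofFn θ).prod = 0)
    (U : Fin (m + 2) → R) (Θ : Fin (m + 2) → A) (hU0 : U 0 = c) (hU : ∀ i, U i.succ = s * u i)
    (hΘ0 : Θ 0 = -(s • δ)) (hΘ : ∀ i, Θ i.succ = s • θ i + (c * u i) • δ) :
    contractedProd U Θ = s ^ m • (δ * contractedProd u θ) := by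
  rw [contractedProd_succ]
  simp only [hU0, hU, hΘ0, hΘ]
  rw [prod_ofFn_smul_add s c δ u θ hδ2 hδθ, hprod, neg_mul, smul_mul_assoc,
    mul_contractedProd_smul_add s c δ u θ hδ2 hδθ, smul_zero, zero_add, sub_neg_eq_add,
    smul_smul, smul_smul, ← add_smul]
  congr 1
  linear_combination s ^ m * hsc

theorem anticomm_cons {m : ℕ} (s c : R) (δ : A) (u : Fin (m + 1) → R)
    (θ : Fin (m + 1) → A) (hδ2 : δ * δ = 0) (hδθ : ∀ i, δ * θ i = -(θ i * δ))
    (hθ : ∀ i j, i ≠ j → θ i * θ j = -(θ j * θ i))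
    (Θ : Fin (m + 2) → A) (hΘ0 : Θ 0 = -(s • δ))
    (hΘ : ∀ i, Θ i.succ = s • θ i + (c * u i) • δ) (i j : Fin (m + 2)) (hij : i ≠ j) :
    Θ i * Θ j = -(Θ j * Θ i) := by
  cases i using Fin.cases with
  | zero =>
    cases j using Fin.cases with
    | zero => exact absurd rfl hij
    | succ j =>
      simp only [hΘ0, hΘ, add_mul, mul_add, smul_mul_assoc, mul_smul_comm, neg_mul, mul_neg,
        hδ2, hδθ]
      module
  | succ i =>
    cases j using Fin.cases with
    | zero =>
      simp only [hΘ0, hΘ, add_mul, mul_add, smul_mul_assoc, mul_smul_comm, neg_mul, mul_neg,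
        hδ2, hδθ]
      module
    | succ j =>
      have hij' : i ≠ j := fun h => hij (by rw [h])
      simp only [hΘ, add_mul, mul_add, smul_mul_assoc, mul_smul_comm, hδ2, hδθ, hθ i j hij']
      module

theorem sum_perm_cons {m : ℕ} (s c : R) (δ : A) (u : Fin (m + 1) → R)
    (θ : Fin (m + 1) → A) (hsc : s ^ 2 + c ^ 2 = 1) (hδ2 : δ * δ = 0)
    (hδθ : ∀ i, δ * θ i = -(θ i * δ)) (hθ : ∀ i j, i ≠ j → θ i * θ j = -(θ j * θ i))
    (hθ2 : ∀ i, θ i * θ i = 0) (hsum2 : ∑ i, u i ^ 2 = 1) (hsum1 : ∑ i, u i • θ i = 0)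
    (U : Fin (m + 2) → R) (Θ : Fin (m + 2) → A) (hU0 : U 0 = c) (hU : ∀ i, U i.succ = s * u i)
    (hΘ0 : Θ 0 = -(s • δ)) (hΘ : ∀ i, Θ i.succ = s • θ i + (c * u i) • δ) :
    ∑ τ : Equiv.Perm (Fin (m + 2)), (Equiv.Perm.sign τ : ℤ) •
        (U (τ 0) • ((List.ofFn fun i => Θ (τ i)).tail).prod)
      = (m + 1) • (s ^ m • (δ * ∑ ρ : Equiv.Perm (Fin (m + 1)), (Equiv.Perm.sign ρ : ℤ) •
          (u (ρ 0) • ((List.ofFn fun i => θ (ρ i)).tail).prod))) := by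
  rw [sum_perm_eq_factorial_smul U Θ (anticomm_cons s c δ u θ hδ2 hδθ hθ Θ hΘ0 hΘ),
    sum_perm_eq_factorial_smul u θ hθ,
    contractedProd_cons s c δ u θ hsc hδ2 hδθ (prod_ofFn_eq_zero u θ hθ hθ2 hsum2 hsum1)
      U Θ hU0 hU hΘ0 hΘ, mul_smul_comm, smul_comm (s ^ m) (m.factorial), smul_smul,
    Nat.factorial_succ]

end

/-- In the setting of the pullback formula (central `s, c` with `s² + c² = 1`; `δ` with
`δ² = 0` anticommuting with the `θᵉ_i` and commuting with the even elements; central `uᵉ_i`;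
pairwise anticommuting square-zero `θᵉ_i`; `u₁ = c`, `u_i = s·uᵉ_i`, `θ₁ = −s·δ`,
`θ_i = s·θᵉ_i + c·δ·uᵉ_i`), if moreover `Σ (uᵉ_i)² = 1` and `Σ uᵉ_i·θᵉ_i = 0`, then
`Φ₀ = Σ_τ sgn(τ)·u_{τ(1)}·θ_{τ(2)}⋯θ_{τ(n)}` satisfies `Φ₀ = (n−1)·s^{n−2}·δ·Φᵉ₀`,
where `Φᵉ₀ = Σ_ρ sgn(ρ)·uᵉ_{ρ(2)}·θᵉ_{ρ(3)}⋯θᵉ_{ρ(n)}`. -/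
theorem chernPhi0_pullback (n : ℕ) (hn : 2 ≤ n) {A : Type*} [Ring A]
    (s c δ : A) (ue θe : Fin (n - 1) → A)
    (hs : ∀ a : A, Commute s a) (hc : ∀ a : A, Commute c a)
    (hsc : s ^ 2 + c ^ 2 = 1)
    (hδ2 : δ * δ = 0)
    (hδθe : ∀ i : Fin (n - 1), δ * θe i = -(θe i * δ))
    (hδs : Commute δ s) (hδc : Commute δ c)
    (hδue : ∀ i : Fin (n - 1), Commute δ (ue i))
    (hue : ∀ (i : Fin (n - 1)) (a : A), Commute (ue i) a)
    (hθe : ∀ i j : Fin (n - 1), i ≠ j → θe i * θe j = -(θe j * θe i))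
    (hθe2 : ∀ i : Fin (n - 1), θe i * θe i = 0)
    (hθes : ∀ i : Fin (n - 1), Commute (θe i) s)
    (hθec : ∀ i : Fin (n - 1), Commute (θe i) c)
    (hθeue : ∀ i j : Fin (n - 1), Commute (θe i) (ue j))
    (u θ : Fin n → A)
    (hu0 : u ⟨0, by omega⟩ = c)
    (hui : ∀ i : Fin (n - 1), u (embSucc n i) = s * ue i)
    (hθ0 : θ ⟨0, by omega⟩ = -(s * δ))
    (hθi : ∀ i : Fin (n - 1), θ (embSucc n i) = s * θe i + c * δ * ue i)
    (hsum2 : ∑ i : Fin (n - 1), ue i ^ 2 = 1)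
    (hsum1 : ∑ i : Fin (n - 1), ue i * θe i = 0) :
    ∑ τ : Equiv.Perm (Fin n), (Equiv.Perm.sign τ : ℤ) •
        (u (τ ⟨0, by omega⟩) * ((List.ofFn fun i => θ (τ i)).tail).prod)
      = (n - 1) •
          (s ^ (n - 2) * δ *
            ∑ ρ : Equiv.Perm (Fin (n - 1)), (Equiv.Perm.sign ρ : ℤ) •
              (ue (ρ ⟨0, by omega⟩) * ((List.ofFn fun i => θe (ρ i)).tail).prod)) := by
  obtain ⟨m, rfl⟩ : ∃ m, n = m + 2 := ⟨n - 2, by omega⟩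
  have mem : ∀ {x : A}, (∀ a, Commute x a) → x ∈ Subring.center A := fun h =>
    Subring.mem_center_iff.2 fun a => (h a).symm
  have hu : ∀ i, u i ∈ Subring.center A := by
    intro i
    cases i using Fin.cases with
    | zero => exact hu0 ▸ mem hc
    | succ i => exact (hui i).symm ▸ mul_mem (mem hs) (mem (hue i))
  have h := sum_perm_cons (R := Subring.center A) (m := m) ⟨s, mem hs⟩ ⟨c, mem hc⟩ δ
    (fun i => ⟨ue i, mem (hue i)⟩) θe (Subtype.ext hsc) hδ2 hδθe hθe hθe2
    (Subtype.ext (by simpa using hsum2)) hsum1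
    (fun i => ⟨u i, hu i⟩) θ (Subtype.ext hu0) (fun i => Subtype.ext (hui i)) hθ0
    (fun i => by
      refine (hθi i).trans ?_
      rw [mul_assoc, (hδue i).eq, ← mul_assoc]
      rfl)
  simp only [Subring.smul_def, smul_eq_mul, SubmonoidClass.coe_pow] at h
  rw [← mul_assoc] at h
  exact h
end
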